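/- arXiv:1410.1669 — 3 statements merged into one kernel-verified Lean document; each statement's English description precedes it below -/
import Mathlib

section
/- For any finite simple graph G of order n with minimum degree δ and any integer k ≥ 1: if δ̄ := δ − k > 0 then the total k-domination number satisfies γ_k^t(G) ≤ (1 − δ̄ / ((1+δ̄)^{1+1/δ̄} · b_{k−1}^{1/δ̄})) · n, and if δ ≥ k then γ_k^t(G) ≤ ((ln(δ − k + 1) + ln b_{k−1} + 1)/(δ − k + 1)) · n, where b_{k−1} = C(δ, k−1). -/
open Finset Real

/-- The total k-domination number: the minimum cardinality of a set X such that every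
vertex has at least k neighbours in X. -/
noncomputable def totalKDomNum {V : Type*} [Fintype V] [DecidableEq V]
    (G : SimpleGraph V) [DecidableRel G.Adj] (k : ℕ) : ℕ :=
  sInf {m : ℕ | ∃ X : Finset V,
    (∀ v, k ≤ (G.neighborFinset v ∩ X).card) ∧ m = X.card}

/-!
Put every vertex outside a random set `X` independently with probability `q`, and restrict
attention to `δ` chosen neighbours of each vertex. If `m` of these avoid `X`, the vertex lacks at
most `m - (δ - k)` neighbours in `X`, and `m - (δ - k) ≤ C(m, δ - k + 1)` (truncated subtraction).
This binomial coefficient counts the `(δ - k + 1)`-subsets of the chosen neighbours that avoid `X`,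
so its expectation is `C(δ, δ - k + 1) q ^ (δ - k + 1) = b q ^ (δ - k + 1)`. Adding the missing
neighbours to an `X` of at most average cost gives `γ ≤ (1 - q + b q ^ (δ - k + 1)) n` for every
`q ∈ [0, 1]`. The first bound is the minimum over `q`; the second takes `q = max 0 (1 - p)` with
`p = log ((δ - k + 1) b) / (δ - k + 1)` and uses `1 - p ≤ exp (-p)`.
-/

theorem sub_le_choose_succ (m d : ℕ) : m - d ≤ m.choose (d + 1) := by
  induction m with
  | zero => simp
  | succ m ih =>
    rw [Nat.choose_succ_succ']
    rcases le_or_gt d m with hdm | hmd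
    · have := Nat.choose_pos hdm
      omega
    · omega

theorem card_filter_disjoint_powersetCard {α : Type*} [DecidableEq α] (A X : Finset α) (e : ℕ) :
    #{T ∈ A.powersetCard e | Disjoint T X} = (#(A \ X)).choose e := by
  rw [← card_powersetCard]
  congr 1
  ext T
  simp only [mem_powersetCard, mem_filter, subset_sdiff]
  tauto

section RandomSubset

variable {α ι R : Type*} [Fintype α] [DecidableEq α] [CommRing R]

/-- The probability that a random subset of `α` equals `X`, when each element is left out
independently with probability `q`. It serves to average the cost of a subset; omission rather than
inclusion is the parameter because the costs count sets which the random subset avoids. -/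
def bernoulliWeight (q : R) (X : Finset α) : R :=
  (1 - q) ^ #X * q ^ #Xᶜ

theorem sum_bernoulliWeight (q : R) : ∑ X : Finset α, bernoulliWeight q X = 1 := by
  simp only [bernoulliWeight, card_compl, Fintype.sum_pow_mul_eq_add_pow, sub_add_cancel, one_pow]

theorem sum_bernoulliWeight_of_disjoint (q : R) (T : Finset α) :
    ∑ X with Disjoint T X, bernoulliWeight q X = q ^ #T := by
  have avoiding_eq : ({X | Disjoint T X} : Finset (Finset α)) = Tᶜ.powerset := by
    ext X
    simp only [mem_filter, mem_univ, true_and, mem_powerset, subset_compl_comm,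
      subset_compl_iff_disjoint_right]
  have factor : ∀ X ∈ Tᶜ.powerset,
      bernoulliWeight q X = (1 - q) ^ #X * q ^ (#Tᶜ - #X) * q ^ #T := by
    intro X hX
    have hXT : #X ≤ #Tᶜ := card_le_card (mem_powerset.1 hX)
    have hT : #Tᶜ + #T = Fintype.card α := card_compl_add_card T
    rw [bernoulliWeight, mul_assoc, ← pow_add, card_compl]
    congr 2
    omega
  rw [avoiding_eq, sum_congr rfl factor, ← sum_mul, sum_pow_mul_eq_add_pow, sub_add_cancel,
    one_pow, one_mul]

theorem sum_bernoulliWeight_mul_choose_card_sdiff (q : R) (A : Finset α) (e : ℕ) :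
    ∑ X, bernoulliWeight q X * (#(A \ X)).choose e = (#A).choose e * q ^ e := by
  calc ∑ X, bernoulliWeight q X * (#(A \ X)).choose e
      = ∑ T ∈ A.powersetCard e, ∑ X with Disjoint T X, bernoulliWeight q X := by
        simp only [← card_filter_disjoint_powersetCard, natCast_card_filter, mul_sum, mul_ite,
          mul_one, mul_zero, sum_filter]
        exact sum_comm
    _ = ∑ _ ∈ A.powersetCard e, q ^ e := sum_congr rfl fun _ hT => by
        rw [sum_bernoulliWeight_of_disjoint, (mem_powersetCard.1 hT).2]
    _ = (#A).choose e * q ^ e := by rw [sum_const, card_powersetCard, nsmul_eq_mul]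

theorem sum_bernoulliWeight_mul_card (q : R) :
    ∑ X : Finset α, bernoulliWeight q X * #X = (1 - q) * Fintype.card α := by
  have card_eq (X : Finset α) : (#X : R) = Fintype.card α - (#(univ \ X)).choose 1 := by
    rw [Nat.choose_one_right, ← compl_eq_univ_sdiff, eq_sub_iff_add_eq, ← Nat.cast_add,
      card_add_card_compl]
  calc ∑ X : Finset α, bernoulliWeight q X * #X
      = ∑ X, bernoulliWeight q X * Fintype.card α -
          ∑ X, bernoulliWeight q X * (#(univ \ X)).choose 1 := by
        rw [← sum_sub_distrib]
        exact sum_congr rfl fun X _ => by rw [card_eq, mul_sub]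
    _ = Fintype.card α - Fintype.card α * q := by
        rw [← sum_mul, sum_bernoulliWeight, one_mul, sum_bernoulliWeight_mul_choose_card_sdiff,
          card_univ, Nat.choose_one_right, pow_one]
    _ = (1 - q) * Fintype.card α := by ring

theorem exists_card_add_sum_choose_card_sdiff_le {𝕜 : Type*} [Field 𝕜] [LinearOrder 𝕜]
    [IsStrictOrderedRing 𝕜] [Fintype ι] (N : ι → Finset α) (e : ℕ) {q : 𝕜}
    (hq : q ∈ Set.Icc 0 1) :
    ∃ X : Finset α, (#X : 𝕜) + ∑ i, ((#(N i \ X)).choose e : 𝕜) ≤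
      (1 - q) * Fintype.card α + ∑ i, (#(N i)).choose e * q ^ e := by
  set cost : Finset α → 𝕜 := fun X => #X + ∑ i, ((#(N i \ X)).choose e : 𝕜)
  have weight_nonneg (X : Finset α) : 0 ≤ bernoulliWeight q X :=
    mul_nonneg (pow_nonneg (sub_nonneg.2 hq.2) _) (pow_nonneg hq.1 _)
  have weight_sum : ∑ X : Finset α, bernoulliWeight q X = 1 := sum_bernoulliWeight q
  have expected_cost : ∑ X, bernoulliWeight q X * cost X =
      (1 - q) * Fintype.card α + ∑ i, (#(N i)).choose e * q ^ e := by
    simp only [cost, mul_add, mul_sum, sum_add_distrib, sum_bernoulliWeight_mul_card]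
    rw [sum_comm]
    simp only [sum_bernoulliWeight_mul_choose_card_sdiff]
  obtain ⟨X, -, hX⟩ := (concaveOn_id (𝕜 := 𝕜) convex_univ).exists_le_of_centerMass
    (t := univ) (p := cost) (fun X _ => weight_nonneg X) (weight_sum ▸ one_pos)
    (fun _ _ => Set.mem_univ _)
  rw [centerMass_eq_of_sum_1 _ _ weight_sum] at hX
  exact ⟨X, expected_cost ▸ hX⟩

end RandomSubset

section Transversal

variable {α ι : Type*} [DecidableEq α] [Fintype ι]

theorem exists_forall_le_card_inter_of_card_add_sum_sub (N : ι → Finset α) {k : ℕ}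
    (hN : ∀ i, k ≤ #(N i)) (X : Finset α) :
    ∃ Y : Finset α, (∀ i, k ≤ #(N i ∩ Y)) ∧ #Y ≤ #X + ∑ i, (k - #(N i ∩ X)) := by
  have exists_missing (i : ι) : ∃ A ⊆ N i \ X, #A = k - #(N i ∩ X) := by
    have hsplit := card_sdiff_add_card_inter (N i) X
    have hNi := hN i
    exact exists_subset_card_eq (by omega)
  choose A hA_sub hA_card using exists_missing
  refine ⟨X ∪ univ.biUnion A, fun i => ?_, ?_⟩
  · have hdisj : Disjoint (N i ∩ X) (A i) :=
      (disjoint_sdiff_inter (N i) X).symm.mono_right (hA_sub i)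
    have hsub : N i ∩ X ∪ A i ⊆ N i ∩ (X ∪ univ.biUnion A) :=
      union_subset (inter_subset_inter_left subset_union_left)
        (subset_inter ((hA_sub i).trans sdiff_subset)
          ((subset_biUnion_of_mem A (mem_univ i)).trans subset_union_right))
    calc k ≤ #(N i ∩ X) + #(A i) := by rw [hA_card]; omega
      _ = #(N i ∩ X ∪ A i) := (card_union_of_disjoint hdisj).symm
      _ ≤ #(N i ∩ (X ∪ univ.biUnion A)) := card_le_card hsub
  · calc #(X ∪ univ.biUnion A) ≤ #X + #(univ.biUnion A) := card_union_le _ _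
      _ ≤ #X + ∑ i, #(A i) := by gcongr; exact card_biUnion_le
      _ = #X + ∑ i, (k - #(N i ∩ X)) := by simp only [hA_card]

theorem exists_forall_le_card_inter_of_le_card [Fintype α] {𝕜 : Type*} [Field 𝕜] [LinearOrder 𝕜]
    [IsStrictOrderedRing 𝕜] (N : ι → Finset α) {k d : ℕ} (hN : ∀ i, k + d ≤ #(N i)) {q : 𝕜}
    (hq : q ∈ Set.Icc 0 1) :
    ∃ Y : Finset α, (∀ i, k ≤ #(N i ∩ Y)) ∧
      (#Y : 𝕜) ≤ (1 - q) * Fintype.card α +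
        Fintype.card ι * ((k + d).choose (d + 1) * q ^ (d + 1)) := by
  choose M hMN hM using fun i => exists_subset_card_eq (hN i)
  obtain ⟨X, hX⟩ := exists_card_add_sum_choose_card_sdiff_le M (d + 1) hq
  obtain ⟨Y, hMY, hY⟩ :=
    exists_forall_le_card_inter_of_card_add_sum_sub M (fun i => (hM i).symm ▸ k.le_add_right d) X
  refine ⟨Y, fun i => (hMY i).trans (card_le_card (inter_subset_inter_right (hMN i))), ?_⟩
  have deficiency_le (i : ι) : k - #(M i ∩ X) ≤ (#(M i \ X)).choose (d + 1) := by
    have hsplit := card_sdiff_add_card_inter (M i) X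
    have hMi := hM i
    exact le_trans (by omega) (sub_le_choose_succ #(M i \ X) d)
  calc (#Y : 𝕜) ≤ #X + ∑ i, ((#(M i \ X)).choose (d + 1) : 𝕜) := by
        exact_mod_cast hY.trans (Nat.add_le_add_left (sum_le_sum fun i _ => deficiency_le i) _)
    _ ≤ (1 - q) * Fintype.card α + ∑ i, ((#(M i)).choose (d + 1) : 𝕜) * q ^ (d + 1) := hX
    _ = (1 - q) * Fintype.card α + Fintype.card ι * ((k + d).choose (d + 1) * q ^ (d + 1)) := by
        simp only [hM, sum_const, card_univ, nsmul_eq_mul]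

end Transversal

theorem totalKDomNum_le {V : Type*} [Fintype V] [DecidableEq V] (G : SimpleGraph V)
    [DecidableRel G.Adj] {k d : ℕ} (hG : k + d ≤ G.minDegree) {q : ℝ} (hq : q ∈ Set.Icc 0 1) :
    (totalKDomNum G k : ℝ) ≤
      (1 - q + (k + d).choose (d + 1) * q ^ (d + 1)) * Fintype.card V := by
  have hN (v : V) : k + d ≤ #(G.neighborFinset v) :=
    (G.card_neighborFinset_eq_degree v).symm ▸ hG.trans (G.minDegree_le_degree v)
  obtain ⟨Y, hNY, hY⟩ := exists_forall_le_card_inter_of_le_card (G.neighborFinset ·) hN hq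
  calc (totalKDomNum G k : ℝ) ≤ #Y := Nat.cast_le.2 (Nat.sInf_le ⟨Y, hNY, rfl⟩)
    _ ≤ (1 - q) * Fintype.card V +
          Fintype.card V * ((k + d).choose (d + 1) * q ^ (d + 1)) := hY
    _ = (1 - q + (k + d).choose (d + 1) * q ^ (d + 1)) * Fintype.card V := by ring

-- The witness `q = ((1 + d) b) ^ (-1 / d)` is the critical point of `1 - q + b q ^ (d + 1)`.
theorem exists_one_sub_add_mul_pow_eq {b : ℝ} {d : ℕ} (hd : d ≠ 0) (hb : 1 ≤ (1 + d) * b) :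
    ∃ q ∈ Set.Icc (0 : ℝ) 1, 1 - q + b * q ^ (d + 1) =
      1 - d / ((1 + d) ^ (1 + 1 / (d : ℝ)) * b ^ (1 / (d : ℝ))) := by
  have hd1 : (0 : ℝ) < 1 + d := by positivity
  have hb0 : 0 < b := pos_of_mul_pos_right (one_pos.trans_le hb) hd1.le
  set r : ℝ := ((1 + d) * b) ^ (1 / (d : ℝ)) with hr
  have one_le_r : 1 ≤ r := one_le_rpow hb (by positivity)
  have r_pow : r ^ d = (1 + d) * b := by
    rw [hr, one_div, rpow_inv_natCast_pow (by positivity) hd]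
  have denominator_eq : (1 + d : ℝ) ^ (1 + 1 / (d : ℝ)) * b ^ (1 / (d : ℝ)) = (1 + d) * r := by
    rw [rpow_add hd1, rpow_one, mul_assoc, ← mul_rpow hd1.le hb0.le]
  refine ⟨r⁻¹, ⟨by positivity, inv_le_one_of_one_le₀ one_le_r⟩, ?_⟩
  rw [denominator_eq, pow_succ, inv_pow, r_pow]
  field_simp
  ring

theorem exists_one_sub_add_mul_pow_le_log {b : ℝ} {m : ℕ} (hb : 1 ≤ m * b) :
    ∃ q ∈ Set.Icc (0 : ℝ) 1, 1 - q + b * q ^ m ≤ (log m + log b + 1) / m := by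
  have hm : (0 : ℝ) < m := m.cast_nonneg.lt_of_ne' (by rintro h; norm_num [h] at hb)
  have hb0 : 0 < b := pos_of_mul_pos_right (one_pos.trans_le hb) hm.le
  set p : ℝ := log (m * b) / m with hp
  have p_nonneg : 0 ≤ p := div_nonneg (log_nonneg hb) hm.le
  have exp_pow : exp (-p) ^ m = (m * b)⁻¹ := by
    rw [← exp_nat_mul, mul_neg, hp, mul_div_cancel₀ _ hm.ne', exp_neg, exp_log (by positivity)]
  have q_le_exp : max 0 (1 - p) ≤ exp (-p) :=
    max_le (exp_pos _).le (one_sub_le_exp_neg p)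
  refine ⟨max 0 (1 - p), ⟨le_max_left _ _, max_le zero_le_one (by linarith)⟩, ?_⟩
  calc 1 - max 0 (1 - p) + b * max 0 (1 - p) ^ m
      ≤ 1 - (1 - p) + b * exp (-p) ^ m := by
        gcongr
        exact le_max_right _ _
    _ = (log m + log b + 1) / m := by
        rw [exp_pow, hp, log_mul hm.ne' hb0.ne']
        field_simp
        ring

theorem total_k_domination_bounds
    {V : Type*} [Fintype V] [DecidableEq V]
    (G : SimpleGraph V) [DecidableRel G.Adj]
    (n : ℕ) (hn : n = Fintype.card V)
    (δ : ℕ) (hδ : δ = G.minDegree)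
    (k : ℕ) (hk : 1 ≤ k)
    (b : ℝ) (hb : b = (δ.choose (k - 1) : ℕ)) :
    ((0 : ℝ) < (δ : ℝ) - k →
      (totalKDomNum G k : ℝ) ≤
        (1 - ((δ : ℝ) - k) /
          ((1 + ((δ : ℝ) - k)) ^ (1 + 1 / ((δ : ℝ) - k)) * b ^ (1 / ((δ : ℝ) - k)))) * n) ∧
    (k ≤ δ →
      (totalKDomNum G k : ℝ) ≤
        ((Real.log ((δ : ℝ) - k + 1) + Real.log b + 1) / ((δ : ℝ) - k + 1)) * n) := by
  subst hn hδ
  have bound {d : ℕ} (hd : G.minDegree = k + d) {q : ℝ} (hq : q ∈ Set.Icc 0 1) :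
      (totalKDomNum G k : ℝ) ≤ (1 - q + b * q ^ (d + 1)) * Fintype.card V := by
    rw [hb, hd, Nat.choose_symm_of_eq_add (show k + d = (k - 1) + (d + 1) by omega)]
    exact totalKDomNum_le G hd.ge hq
  have one_le_mul_b {m : ℕ} (hm : 1 ≤ m) (hkδ : k ≤ G.minDegree) : (1 : ℝ) ≤ m * b := by
    rw [hb, ← Nat.cast_mul, Nat.one_le_cast]
    exact Nat.mul_pos hm (Nat.choose_pos (by omega))
  constructor
  · intro hpos
    have hlt : k < G.minDegree := by exact_mod_cast sub_pos.1 hpos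
    obtain ⟨d, hd⟩ := Nat.exists_eq_add_of_le hlt.le
    have hcast : (G.minDegree : ℝ) - k = d := by rw [hd, Nat.cast_add, add_sub_cancel_left]
    obtain ⟨q, hq, hqb⟩ := exists_one_sub_add_mul_pow_eq (d := d) (b := b) (by omega)
      (by exact_mod_cast one_le_mul_b (Nat.le_add_right 1 d) hlt.le)
    rw [hcast, ← hqb]
    exact bound hd hq
  · intro hle
    obtain ⟨d, hd⟩ := Nat.exists_eq_add_of_le hle
    have hcast : (G.minDegree : ℝ) - k + 1 = (d + 1 : ℕ) := by rw [hd]; push_cast; ring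
    obtain ⟨q, hq, hqb⟩ :=
      exists_one_sub_add_mul_pow_le_log (one_le_mul_b (Nat.le_add_left 1 d) hle)
    rw [hcast]
    exact (bound hd hq).trans (by gcongr)
end

section
/- For any finite simple graph G of order n with minimum degree δ ≥ 1, the total domination number satisfies γ_t(G) ≤ ((ln δ + 1)/δ) · n. -/
open Finset Real

/-!
A total dominating set is a transversal of the hypergraph of open neighbourhoods. Choose vertices
independently with probability `p`, and add one vertex of each edge that the random set misses. If
every edge has at least `k` vertices, the expected size of the resulting transversal is at most
`p * n + (1 - p) ^ k * m`, where `n` and `m` count vertices and edges. For `p = log k / k` the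
probability `(1 - p) ^ k` of missing an edge is at most `exp (-log k) = 1 / k`.
-/

section SetBernoulli

open MeasureTheory ProbabilityTheory unitInterval

variable {α : Type*} {u : Set α}

lemma setBernoulli_real_disjoint (p : I) {t : Finset α} (ht : (t : Set α) ⊆ u) :
    setBer(u, p).real {s | Disjoint s t} = (1 - p : ℝ) ^ #t := by
  have preimage_eq : (fun P : α → Prop ↦ {i | P i}) ⁻¹' {s | Disjoint s t} =
      Set.pi t fun _ ↦ {False} := by
    ext P
    simp [Set.disjoint_right, Set.mem_pi]
  have factor_eq (i : α) (hi : i ∈ t) :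
      (unitInterval.toNNReal p • Measure.dirac (i ∈ u) +
        unitInterval.toNNReal (σ p) • Measure.dirac False) {False} =
      unitInterval.toNNReal (σ p) := by
    simp [show i ∈ u from ht hi]
  rw [measureReal_def, setBernoulli_apply', preimage_eq, Measure.infinitePi_pi _ (by simp),
    prod_congr rfl factor_eq]
  simp

lemma setBernoulli_real_mem (p : I) {a : α} (ha : a ∈ u) :
    setBer(u, p).real {s | a ∈ s} = p := by
  have compl_eq : {s : Set α | a ∈ s}ᶜ = {s : Set α | Disjoint s ({a} : Finset α)} := by
    ext s
    simp
  have measurable : MeasurableSet {s : Set α | a ∈ s} :=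
    measurableSet_setOfPred.2 (measurable_set_mem a)
  have prob_notMem := setBernoulli_real_disjoint p (t := {a}) (by simpa using ha)
  rw [← compl_eq, probReal_compl_eq_one_sub measurable, card_singleton, pow_one] at prob_notMem
  linarith

end SetBernoulli

section Transversal

variable {V ι : Type*}

/-- `X` is a transversal (hitting set) of the hypergraph with vertex type `V` whose edges are the
sets `E i`; indexing the edges allows repetitions. -/
def IsTransversal (E : ι → Finset V) (X : Finset V) : Prop :=
  ∀ i, ¬ Disjoint X (E i)

variable [Fintype ι] (E : ι → Finset V)

open MeasureTheory ProbabilityTheory unitInterval in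
lemma exists_card_add_card_disjoint_le [Fintype V] [DecidableEq V] (p : I) :
    ∃ X : Finset V, (#X + #{i | Disjoint X (E i)} : ℝ) ≤
      p * Fintype.card V + ∑ i, (1 - p : ℝ) ^ #(E i) := by
  classical
  let cost (s : Set V) : ℝ :=
    ∑ v, {s : Set V | v ∈ s}.indicator 1 s + ∑ i, {s | Disjoint s (E i : Set V)}.indicator 1 s
  have cost_coe (X : Finset V) : cost X = #X + #{i | Disjoint X (E i)} := by
    simp [cost, Set.indicator_apply]
  have expected_cost : ∫ s, cost s ∂setBer(Set.univ, p) =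
      p * Fintype.card V + ∑ i, (1 - p : ℝ) ^ #(E i) := by
    simp_rw [cost]
    rw [integral_add .of_finite .of_finite, integral_finsetSum _ fun _ _ ↦ .of_finite,
      integral_finsetSum _ fun _ _ ↦ .of_finite]
    simp_rw [integral_indicator_one (Set.toFinite _).measurableSet,
      setBernoulli_real_mem p (Set.mem_univ _), setBernoulli_real_disjoint p (Set.subset_univ _)]
    simp [mul_comm]
  obtain ⟨s, cost_le⟩ := exists_le_integral (μ := setBer(Set.univ, p)) (f := cost) .of_finite
  refine ⟨s.toFinset, ?_⟩
  rwa [← cost_coe, Set.coe_toFinset, ← expected_cost]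

variable {E}

lemma exists_isTransversal_card_le_add [DecidableEq V] (hE : ∀ i, (E i).Nonempty)
    (X : Finset V) :
    ∃ Y, IsTransversal E Y ∧ #Y ≤ #X + #{i | Disjoint X (E i)} := by
  choose f hf using hE
  refine ⟨X ∪ image f {i | Disjoint X (E i)}, fun i ↦ ?_,
    (card_union_le _ _).trans (by gcongr; exact card_image_le)⟩
  rw [disjoint_union_left]
  rintro ⟨hX, himage⟩
  exact disjoint_left.1 himage (mem_image_of_mem f (by simpa using hX)) (hf i)

variable [Fintype V] {k : ℕ}

open unitInterval in
lemma exists_isTransversal_card_le_of_prob (p : I) (hk : 1 ≤ k) (hE : ∀ i, k ≤ #(E i)) :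
    ∃ Y, IsTransversal E Y ∧
      (#Y : ℝ) ≤ p * Fintype.card V + Fintype.card ι * (1 - p : ℝ) ^ k := by
  classical
  obtain ⟨X, hX⟩ := exists_card_add_card_disjoint_le E p
  obtain ⟨Y, hY, hYX⟩ :=
    exists_isTransversal_card_le_add (fun i ↦ card_pos.1 (hk.trans (hE i))) X
  refine ⟨Y, hY, ?_⟩
  calc
    (#Y : ℝ) ≤ #X + #{i | Disjoint X (E i)} := mod_cast hYX
    _ ≤ p * Fintype.card V + ∑ i, (1 - p : ℝ) ^ #(E i) := hX
    _ ≤ p * Fintype.card V + ∑ _i : ι, (1 - p : ℝ) ^ k := by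
      gcongr _ + ∑ i, ?_ with i
      exact pow_le_pow_of_le_one (sub_nonneg.2 p.2.2) (sub_le_self _ p.2.1) (hE i)
    _ = p * Fintype.card V + Fintype.card ι * (1 - p : ℝ) ^ k := by simp

lemma exists_isTransversal_card_le (hk : 1 ≤ k) (hE : ∀ i, k ≤ #(E i)) :
    ∃ Y, IsTransversal E Y ∧
      (#Y : ℝ) ≤ (log k * Fintype.card V + Fintype.card ι) / k := by
  have k_pos : (0 : ℝ) < k := mod_cast hk
  have log_le : log k ≤ k := log_le_self k_pos.le
  have miss_le : (1 - log k / k) ^ k ≤ (k : ℝ)⁻¹ := by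
    simpa [exp_neg, exp_log k_pos] using one_sub_div_pow_le_exp_neg log_le
  obtain ⟨Y, hY, hcard⟩ := exists_isTransversal_card_le_of_prob
    ⟨log k / k, div_nonneg (log_natCast_nonneg k) k_pos.le, (div_le_one k_pos).2 log_le⟩ hk hE
  refine ⟨Y, hY, ?_⟩
  calc
    (#Y : ℝ) ≤ log k / k * Fintype.card V + Fintype.card ι * (1 - log k / k) ^ k := hcard
    _ ≤ log k / k * Fintype.card V + Fintype.card ι * (k : ℝ)⁻¹ := by gcongr
    _ = (log k * Fintype.card V + Fintype.card ι) / k := by ring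

end Transversal

section TotalDomination

variable {V : Type*} [Fintype V] [DecidableEq V] (G : SimpleGraph V) [DecidableRel G.Adj]
  {X : Finset V}

lemma totalKDomNum_le_card {k : ℕ} (hX : ∀ v, k ≤ #(G.neighborFinset v ∩ X)) :
    totalKDomNum G k ≤ #X :=
  Nat.sInf_le ⟨X, hX, rfl⟩

lemma totalKDomNum_one_le_card_of_isTransversal (hX : IsTransversal (G.neighborFinset ·) X) :
    totalKDomNum G 1 ≤ #X := by
  refine totalKDomNum_le_card G fun v ↦ card_pos.2 ?_
  rw [inter_comm, ← not_disjoint_iff_nonempty_inter]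
  exact hX v

end TotalDomination

theorem total_domination_bound
    {V : Type*} [Fintype V] [DecidableEq V]
    (G : SimpleGraph V) [DecidableRel G.Adj]
    (n : ℕ) (hn : n = Fintype.card V)
    (δ : ℕ) (hδ : δ = G.minDegree)
    (hδ1 : 1 ≤ δ) :
    (totalKDomNum G 1 : ℝ) ≤ ((Real.log δ + 1) / δ) * n := by
  have neighborFinset_card_ge (v : V) : δ ≤ #(G.neighborFinset v) := by
    simpa [hδ] using G.minDegree_le_degree v
  obtain ⟨X, hX, hcard⟩ := exists_isTransversal_card_le hδ1 neighborFinset_card_ge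
  calc
    (totalKDomNum G 1 : ℝ) ≤ #X := mod_cast totalKDomNum_one_le_card_of_isTransversal G hX
    _ ≤ (log δ * Fintype.card V + Fintype.card V) / δ := hcard
    _ = (log δ + 1) / δ * n := by rw [hn]; ring
end

section
/- Let 0 < c < 1 be a real constant and k ≥ 1, l ≥ 1 integers with μ = max{k, l}. For any finite simple graph G of order n with minimum degree δ such that μ ≤ (1−c)·ln δ, the parametric domination number satisfies the strict inequality γ_{k,l}(G) < (ln δ/(δ+1) + μ/δ^{0.5·c²}) · n. -/
open Finset Real

/-- The parametric domination number γ_{k,l}: the minimum cardinality of a set D such that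
every vertex outside D has at least k members of D in its closed neighbourhood, and every
vertex of D has at least l members of D in its closed neighbourhood. -/
noncomputable def paramDomNum {V : Type*} [Fintype V] [DecidableEq V]
    (G : SimpleGraph V) [DecidableRel G.Adj] (k l : ℕ) : ℕ :=
  sInf {m : ℕ | ∃ D : Finset V,
    (∀ v, v ∉ D → k ≤ ((insert v (G.neighborFinset v)) ∩ D).card) ∧
    (∀ v, v ∈ D → l ≤ ((insert v (G.neighborFinset v)) ∩ D).card) ∧
    m = D.card}

/-!
Put every vertex into a random set `A` independently with probability `p = ln δ / (δ + 1)`, and for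
every vertex `v` add to `A` as many further vertices of `N[v]` as `A` falls short of `μ` there. By
Markov's inequality applied to `(1 - c) ^ |N[v] ∩ A|`, whose mean is `(1 - c * p) ^ |N[v]|`, the
expected shortfall at `v` is at most
`μ * (1 - c * p) ^ (δ + 1) / (1 - c) ^ μ ≤ μ * exp (-(c + (1 - c) * ln (1 - c)) * ln δ)`,
and `c + (1 - c) * ln (1 - c) > c ^ 2 / 2`.
-/

section RandomSubset

open MeasureTheory ProbabilityTheory
open scoped unitInterval

variable {ι V : Type*} [Fintype ι]

lemma integral_prod_mem_setBernoulli [Fintype V] (u : Set V) (p : I) (f : V → Prop → ℝ) :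
    ∫ A, ∏ v, f v (v ∈ A) ∂setBernoulli u p =
      ∏ v, ((p : ℝ) * f v (v ∈ u) + (1 - p) * f v False) := by
  rw [setBernoulli_eq_map, integral_map (by fun_prop) .of_discrete, Measure.infinitePi_eq_pi]
  simp only [Set.mem_ofPred_eq]
  rw [integral_fintype_prod_eq_prod]
  refine Finset.prod_congr rfl fun v _ ↦ ?_
  rw [integral_add_measure .of_finite .of_finite, integral_smul_nnreal_measure,
    integral_smul_nnreal_measure, integral_dirac, integral_dirac]
  simp [NNReal.smul_def]

open scoped Classical in
lemma integral_pow_ncard_inter_setBernoulli [Finite V] (S : Set V) (p : I) (x : ℝ) :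
    ∫ A, x ^ (S ∩ A).ncard ∂setBernoulli Set.univ p = (1 - p + p * x) ^ S.ncard := by
  cases nonempty_fintype V
  have pow_ncard (T : Set V) (y : ℝ) : y ^ T.ncard = ∏ v, if v ∈ T then y else 1 := by
    simp [Finset.prod_ite, Set.ncard_eq_toFinset_card', Set.toFinset]
  simp only [pow_ncard, Set.mem_inter_iff]
  rw [integral_prod_mem_setBernoulli Set.univ p fun v P ↦ if v ∈ S ∧ P then x else 1]
  refine Finset.prod_congr rfl fun v _ ↦ ?_
  by_cases hv : v ∈ S
  · simp [hv, add_comm]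
  · simp [hv]

open scoped Classical in
lemma integral_ncard_setBernoulli [Fintype V] (p : I) :
    ∫ A, (A.ncard : ℝ) ∂setBernoulli (Set.univ : Set V) p = p * Fintype.card V := by
  have indicator_mem (v : V) (A : Set V) :
      (if v ∈ A then 1 else 0 : ℝ) = 1 - 0 ^ ({v} ∩ A).ncard := by
    by_cases hv : v ∈ A <;> simp [hv]
  have ncard_eq_sum (A : Set V) : (A.ncard : ℝ) = ∑ v, if v ∈ A then 1 else 0 := by
    simp [Set.ncard_eq_toFinset_card', Set.toFinset]
  simp only [ncard_eq_sum, indicator_mem]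
  rw [integral_finsetSum _ fun _ _ ↦ .of_finite]
  simp [integral_sub, integral_pow_ncard_inter_setBernoulli, mul_comm]

lemma exists_card_add_sum_pow_card_inter_le [Fintype V] [DecidableEq V] (p : I) (x : ℝ)
    (w : ι → ℝ) (S : ι → Finset V) :
    ∃ A : Finset V, (#A : ℝ) + ∑ i, w i * x ^ #(S i ∩ A) ≤
      p * Fintype.card V + ∑ i, w i * (1 - p + p * x) ^ #(S i) := by
  obtain ⟨A, hA⟩ := exists_le_integral (μ := setBernoulli Set.univ p)
    (f := fun A : Set V ↦ (A.ncard : ℝ) + ∑ i, w i * x ^ (↑(S i) ∩ A).ncard) .of_finite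
  rw [integral_add .of_finite .of_finite, integral_finsetSum _ fun _ _ ↦ .of_finite,
    integral_ncard_setBernoulli] at hA
  simp only [integral_const_mul, integral_pow_ncard_inter_setBernoulli, Set.ncard_coe_finset] at hA
  lift A to Finset V using A.toFinite
  simp only [← coe_inter, Set.ncard_coe_finset] at hA
  exact ⟨A, hA⟩

end RandomSubset

section MultipleCover

open scoped unitInterval

variable {ι V : Type*} [Fintype ι] [DecidableEq V]

lemma exists_le_card_inter_and_card_le_add_sum_tsub (A : Finset V) {S : ι → Finset V} {m : ι → ℕ}
    (hS : ∀ i, m i ≤ #(S i)) :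
    ∃ D : Finset V, (∀ i, m i ≤ #(S i ∩ D)) ∧ #D ≤ #A + ∑ i, (m i - #(S i ∩ A)) := by
  have exists_completion (i : ι) : ∃ B ⊆ S i \ A, #B = m i - #(S i ∩ A) := by
    apply exists_subset_card_eq
    rw [card_sdiff, inter_comm]
    exact Nat.sub_le_sub_right (hS i) _
  choose B hB_subset hB_card using exists_completion
  refine ⟨A ∪ univ.biUnion B, fun i ↦ ?_, ?_⟩
  · have h_disjoint : Disjoint (S i ∩ A) (B i) :=
      (subset_sdiff.mp (hB_subset i)).2.symm.mono_left inter_subset_right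
    calc m i ≤ #(S i ∩ A) + #(B i) := by rw [hB_card]; exact le_add_tsub
      _ = #((S i ∩ A) ∪ B i) := (card_union_of_disjoint h_disjoint).symm
      _ ≤ #(S i ∩ (A ∪ univ.biUnion B)) := by
        rw [inter_union_distrib_left]
        gcongr
        exact subset_inter ((hB_subset i).trans sdiff_subset) (subset_biUnion_of_mem B (mem_univ i))
  · calc #(A ∪ univ.biUnion B) ≤ #A + ∑ i, #(B i) :=
          (card_union_le _ _).trans (Nat.add_le_add_left card_biUnion_le _)
      _ = #A + ∑ i, (m i - #(S i ∩ A)) := by simp only [hB_card]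

lemma natCast_tsub_le_div_pow_mul_pow {x : ℝ} (hx0 : 0 < x) (hx1 : x ≤ 1) (m j : ℕ) :
    ((m - j : ℕ) : ℝ) ≤ m / x ^ m * x ^ j := by
  rcases le_total m j with hmj | hjm
  · rw [Nat.sub_eq_zero_of_le hmj, Nat.cast_zero]
    positivity
  · calc ((m - j : ℕ) : ℝ) ≤ m := by exact_mod_cast Nat.sub_le m j
      _ = m / x ^ m * x ^ m := by field_simp
      _ ≤ m / x ^ m * x ^ j := by
        gcongr ?_ * ?_
        exact pow_le_pow_of_le_one hx0.le hx1 hjm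

lemma exists_le_card_inter_and_card_le [Fintype V] {S : ι → Finset V} {d m : ℕ}
    (hS : ∀ i, d ≤ #(S i)) (hm : m ≤ d) (p : I) {c : ℝ} (hc0 : 0 ≤ c) (hc1 : c < 1) :
    ∃ D : Finset V, (∀ i, m ≤ #(S i ∩ D)) ∧
      (#D : ℝ) ≤ p * Fintype.card V + m * ((1 - c * p) ^ d / (1 - c) ^ m) * Fintype.card ι := by
  have hx : 0 < 1 - c := sub_pos.mpr hc1
  have hcp : c * p ≤ 1 := mul_le_one₀ hc1.le p.2.1 p.2.2
  obtain ⟨A, hA⟩ := exists_card_add_sum_pow_card_inter_le p (1 - c) (fun _ ↦ m / (1 - c) ^ m) S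
  obtain ⟨D, hD, hD_card⟩ :=
    exists_le_card_inter_and_card_le_add_sum_tsub A fun i ↦ hm.trans (hS i)
  refine ⟨D, hD, ?_⟩
  calc (#D : ℝ) ≤ #A + ∑ i, ((m - #(S i ∩ A) : ℕ) : ℝ) := by exact_mod_cast hD_card
    _ ≤ #A + ∑ i, m / (1 - c) ^ m * (1 - c) ^ #(S i ∩ A) := by
      gcongr with i
      exact natCast_tsub_le_div_pow_mul_pow hx (by linarith) m _
    _ ≤ p * Fintype.card V + ∑ i, m / (1 - c) ^ m * (1 - c * p) ^ #(S i) := by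
      convert hA using 5
      ring
    _ ≤ p * Fintype.card V + ∑ _i : ι, m / (1 - c) ^ m * (1 - c * p) ^ d := by
      gcongr p * Fintype.card V + ∑ i, m / (1 - c) ^ m * ?_ with i
      exact pow_le_pow_of_le_one (by linarith) (by linarith [mul_nonneg hc0 p.2.1]) (hS i)
    _ = p * Fintype.card V + m * ((1 - c * p) ^ d / (1 - c) ^ m) * Fintype.card ι := by
      rw [sum_const, card_univ, nsmul_eq_mul]
      ring

end MultipleCover

section ChernoffExponent

variable {c : ℝ}

lemma sq_div_two_lt_add_one_sub_mul_log (hc0 : 0 < c) (hc1 : c < 1) :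
    c ^ 2 / 2 < c + (1 - c) * log (1 - c) := by
  have hx : 0 < 1 - c := sub_pos.mpr hc1
  have sinh_lt : (1 - c - (1 - c)⁻¹) / 2 < log (1 - c) :=
    sinh_log hx ▸ sinh_lt_self_iff.mpr (log_neg hx (by linarith))
  calc c ^ 2 / 2 = c + (1 - c) * ((1 - c - (1 - c)⁻¹) / 2) := by field_simp; ring
    _ < c + (1 - c) * log (1 - c) := by gcongr

lemma one_sub_div_pow_div_one_sub_pow_lt_exp (hc0 : 0 < c) (hc1 : c < 1) {t : ℝ} (ht : 0 < t)
    {N m : ℕ} (htN : t ≤ N) (hm : m ≤ (1 - c) * t) :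
    (1 - c * (t / N)) ^ N / (1 - c) ^ m < exp (-(c ^ 2 / 2 * t)) := by
  have hx : 0 < 1 - c := sub_pos.mpr hc1
  have numerator_le : (1 - c * (t / N)) ^ N ≤ exp (-(c * t)) := by
    rw [← mul_div_assoc]
    exact one_sub_div_pow_le_exp_neg ((mul_le_of_le_one_left ht.le hc1.le).trans htN)
  have le_denominator : exp ((1 - c) * t * log (1 - c)) ≤ (1 - c) ^ m := by
    rw [← exp_log (pow_pos hx m), log_pow, exp_le_exp]
    exact mul_le_mul_of_nonpos_right hm (log_nonpos hx.le (by linarith))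
  calc (1 - c * (t / N)) ^ N / (1 - c) ^ m
      ≤ exp (-(c * t)) / exp ((1 - c) * t * log (1 - c)) := by gcongr
    _ = exp (-((c + (1 - c) * log (1 - c)) * t)) := by rw [← exp_sub]; ring_nf
    _ < exp (-(c ^ 2 / 2 * t)) := by
      gcongr
      exact sq_div_two_lt_add_one_sub_mul_log hc0 hc1

end ChernoffExponent

section ParamDomNum

open scoped unitInterval

variable {V : Type*} [Fintype V] [DecidableEq V] (G : SimpleGraph V) [DecidableRel G.Adj]

lemma minDegree_add_one_le_card_insert_neighborFinset (v : V) :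
    G.minDegree + 1 ≤ #(insert v (G.neighborFinset v)) := by
  rw [card_insert_of_notMem (G.notMem_neighborFinset_self v), G.card_neighborFinset_eq_degree]
  exact Nat.succ_le_succ (G.minDegree_le_degree v)

lemma paramDomNum_le_card {k l : ℕ} {D : Finset V}
    (hD : ∀ v, max k l ≤ #(insert v (G.neighborFinset v) ∩ D)) : paramDomNum G k l ≤ #D :=
  Nat.sInf_le ⟨D, fun v _ ↦ (le_max_left k l).trans (hD v),
    fun v _ ↦ (le_max_right k l).trans (hD v), rfl⟩

lemma paramDomNum_le_mul_card {k l : ℕ} (hkl : max k l ≤ G.minDegree + 1) (p : I) {c : ℝ}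
    (hc0 : 0 ≤ c) (hc1 : c < 1) :
    (paramDomNum G k l : ℝ) ≤
      (p + (max k l : ℕ) * ((1 - c * p) ^ (G.minDegree + 1) / (1 - c) ^ max k l)) *
        Fintype.card V := by
  obtain ⟨D, hD, hD_card⟩ := exists_le_card_inter_and_card_le
    (minDegree_add_one_le_card_insert_neighborFinset G) hkl p hc0 hc1
  calc (paramDomNum G k l : ℝ) ≤ #D := by exact_mod_cast paramDomNum_le_card G hD
    _ ≤ _ := by rw [add_mul]; exact hD_card

theorem paramDomNum_lt_mul_card [Nonempty V] {k l : ℕ} {c t : ℝ} (hc0 : 0 < c) (hc1 : c < 1)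
    (ht0 : 0 < t) (ht : t ≤ G.minDegree + 1) (hkl0 : 0 < max k l)
    (hkl : (max k l : ℕ) ≤ (1 - c) * t) :
    (paramDomNum G k l : ℝ) <
      (t / (G.minDegree + 1) + (max k l : ℕ) * exp (-(c ^ 2 / 2 * t))) * Fintype.card V := by
  rw [← Nat.cast_add_one] at ht ⊢
  have hkl_le : max k l ≤ G.minDegree + 1 := by
    exact_mod_cast hkl.trans ((mul_le_of_le_one_left ht0.le (by linarith)).trans ht)
  calc (paramDomNum G k l : ℝ)
      ≤ (t / (G.minDegree + 1 : ℕ) + (max k l : ℕ) * ((1 - c * (t / (G.minDegree + 1 : ℕ))) ^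
          (G.minDegree + 1) / (1 - c) ^ max k l)) * Fintype.card V :=
        paramDomNum_le_mul_card G hkl_le
          ⟨_, by positivity, div_le_one_of_le₀ ht (Nat.cast_nonneg _)⟩ hc0.le hc1
    _ < _ := by
      gcongr
      exact one_sub_div_pow_div_one_sub_pow_lt_exp hc0 hc1 ht0 ht hkl

end ParamDomNum

theorem param_domination_ln_threshold_bound
    {V : Type*} [Fintype V] [DecidableEq V]
    (G : SimpleGraph V) [DecidableRel G.Adj]
    (n : ℕ) (hn : n = Fintype.card V)
    (δ : ℕ) (hδ : δ = G.minDegree)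
    (c : ℝ) (hc0 : 0 < c) (hc1 : c < 1)
    (k l : ℕ) (hk : 1 ≤ k) (hl : 1 ≤ l)
    (μ : ℕ) (hμ : μ = max k l)
    (hμδ : (μ : ℝ) ≤ (1 - c) * Real.log δ) :
    (paramDomNum G k l : ℝ) <
      (Real.log δ / ((δ : ℝ) + 1) + (μ : ℝ) / (δ : ℝ) ^ (0.5 * c ^ 2)) * n := by
  subst hn hδ hμ
  have max_pos : 0 < max k l := hk.trans (le_max_left k l)
  have log_pos : 0 < log G.minDegree :=
    pos_of_mul_pos_right ((Nat.cast_pos.mpr max_pos).trans_le hμδ) (sub_pos.mpr hc1).le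
  have : Nonempty V := by
    by_contra hV
    rw [not_nonempty_iff] at hV
    simp at log_pos
  have minDegree_pos : (0 : ℝ) < G.minDegree :=
    Nat.cast_pos.mpr (Nat.pos_of_ne_zero fun h ↦ by simp [h] at log_pos)
  have log_le : log G.minDegree ≤ G.minDegree + 1 := by
    linarith [log_le_sub_one_of_pos minDegree_pos]
  have inv_rpow : ((G.minDegree : ℝ) ^ (0.5 * c ^ 2))⁻¹ = exp (-(c ^ 2 / 2 * log G.minDegree)) := by
    rw [rpow_def_of_pos minDegree_pos, ← exp_neg]
    ring_nf
  rw [div_eq_mul_inv (_ : ℝ) (_ ^ _), inv_rpow]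
  exact paramDomNum_lt_mul_card G hc0 hc1 log_pos log_le max_pos hμδ
end
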